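/- For every integer 0 ≤ j ≤ n(n−1)/2 + 1, the left R-module homomorphism ⊕_{w : ℓ(w) < j} F_w : R ⊗_{R^{S_n}} R → ⊕_{w : ℓ(w) < j} R is injective on Γ_{<j}, the left R-submodule of R ⊗_{R^{S_n}} R spanned by {S_w : ℓ(w) < j}. -/

import Mathlib

open MvPolynomial

noncomputable section

/-- `R n` is the polynomial ring `ℂ[x_1, …, x_n]`. -/
abbrev R (n : ℕ) := MvPolynomial (Fin n) ℂ

/-- The inversion set of a permutation. -/
def invSet (n : ℕ) (w : Equiv.Perm (Fin n)) : Finset (Fin n × Fin n) :=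
  Finset.univ.filter fun p => p.1 < p.2 ∧ w p.2 < w p.1

/-- The Coxeter length of a permutation, i.e. its number of inversions. -/
def len (n : ℕ) (w : Equiv.Perm (Fin n)) : ℕ := (invSet n w).card

/-- `Δ_w = ∏_{(i,j) ∈ inv(w)} (x_i - x_j)`. -/
def Δpoly (n : ℕ) (w : Equiv.Perm (Fin n)) : R n :=
  ∏ p ∈ invSet n w, (X p.1 - X p.2)

/-- The simple reflection `s_j = (j, j+1)` (1-based `j` corresponds to 0-based index here);
for out-of-range indices we use the identity. -/
def simpleRefl (n : ℕ) (j : ℕ) : Equiv.Perm (Fin n) :=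
  if hj : j + 1 < n then Equiv.swap ⟨j, Nat.lt_of_succ_lt hj⟩ ⟨j + 1, hj⟩ else 1

open Classical in
/-- The Demazure operator `∂_j = (id - s_j)/(x_j - x_{j+1})` on `R n`. -/
def demX (n : ℕ) (j : ℕ) (h : R n) : R n :=
  if hj : j + 1 < n then
    let a : Fin n := ⟨j, Nat.lt_of_succ_lt hj⟩
    let b : Fin n := ⟨j + 1, hj⟩
    if hd : (X a - X b : R n) ∣ (h - rename (Equiv.swap a b) h) then hd.choose else 0
  else 0

/-- Composite Demazure operator along a word `[a_1, …, a_k]`: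
`∂_{a_1} ∘ ⋯ ∘ ∂_{a_k}`. -/
def demWord (n : ℕ) (l : List ℕ) (h : R n) : R n := l.foldr (demX n) h

/-- `l` is a reduced word for `w`: `w = s_{a_1} ⋯ s_{a_k}` with `k = ℓ(w)`. -/
def IsReducedWord (n : ℕ) (w : Equiv.Perm (Fin n)) (l : List ℕ) : Prop :=
  (l.map (simpleRefl n)).prod = w ∧ l.length = len n w

open Classical in
/-- The Demazure operator `∂_w` of a permutation, computed from a (choice of) reduced word;
it is independent of this choice. -/
def dem (n : ℕ) (w : Equiv.Perm (Fin n)) : R n → R n :=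
  if h : ∃ l, IsReducedWord n w l then demWord n h.choose else id

/-- The longest element `w_0` of `S_n`. -/
def w₀ (n : ℕ) : Equiv.Perm (Fin n) := Fin.revPerm

/-- The staircase monomial `x_1^{n-1} x_2^{n-2} ⋯ x_{n-1}`. -/
def staircase (n : ℕ) : R n := ∏ i : Fin n, X i ^ (n - 1 - (i : ℕ))

/-- The Schubert polynomial `𝔖_w(x) = ∂_{w⁻¹ w₀}(x_1^{n-1} ⋯ x_{n-1})`. -/
def schubert (n : ℕ) (w : Equiv.Perm (Fin n)) : R n := dem n (w⁻¹ * w₀ n) (staircase n)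



open TensorProduct

/-- The subalgebra `R^{S_n} ⊆ R` of symmetric polynomials. -/
abbrev Ssub (n : ℕ) := MvPolynomial.symmetricSubalgebra (Fin n) ℂ

/-- The tensor product `R ⊗_{R^{S_n}} R`. -/
abbrev T (n : ℕ) := TensorProduct (Ssub n) (R n) (R n)

/-- `rename w` as an `R^{S_n}`-algebra endomorphism of `R`. -/
def renameS (n : ℕ) (w : Equiv.Perm (Fin n)) : R n →ₐ[Ssub n] R n :=
  { (rename ⇑w : R n →ₐ[ℂ] R n) with
    commutes' := fun s => s.2 w }

/-- `F_w : R ⊗_{R^{S_n}} R → R_w`, the `R`-bimodule homomorphism `f ⊗ g ↦ f · (w·g)`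
(the target `R_w` has underlying abelian group `R`). -/
def Fw (n : ℕ) (w : Equiv.Perm (Fin n)) : T n →ₐ[Ssub n] R n :=
  Algebra.TensorProduct.productMap (AlgHom.id (Ssub n) (R n)) (renameS n w)

open Classical in
/-- `S_w = 1 ⊗ 𝔖_w(x) + Σ 𝔖_v(-x) ⊗ 𝔖_u(x)`, the sum over all factorizations `w = v⁻¹ u`
with `ℓ(u) < ℓ(w)` and `ℓ(w) = ℓ(v) + ℓ(u)`. -/
def Sw (n : ℕ) (w : Equiv.Perm (Fin n)) : T n :=
  (1 : R n) ⊗ₜ[Ssub n] schubert n w +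
  ∑ p ∈ Finset.univ.filter
      (fun p : Equiv.Perm (Fin n) × Equiv.Perm (Fin n) =>
        w = p.2⁻¹ * p.1 ∧ len n p.1 < len n w ∧ len n w = len n p.2 + len n p.1),
    (aeval (fun i => -(X i : R n)) (schubert n p.2)) ⊗ₜ[Ssub n] schubert n p.1

/-!
The homomorphisms `F_u` are triangular on the tensors `S_w`: `F_u(S_w) = 0` whenever
`ℓ(u) ≤ ℓ(w)` and `u ≠ w`, while `F_u(S_u) ≠ 0`. So if a combination of the `S_w` with polynomial
coefficients is killed by the `F_u`, a term of minimal length cannot occur in it.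

Letting `s_i` act on the second factor changes `S_w` by a multiple of `S_{w s_i}`, because
`∂_i 𝔖_u` is `𝔖_{u s_i}` or `0`. Induction on `u` then reduces triangularity to `u = 1`, where
`F_1(S_w)` is the double Schubert polynomial of `w` on the diagonal. For `w ≠ 1` this is homogeneous
of positive degree and free of the last variable, and comparing the actions of `s_i` on the two
factors shows by induction that it is symmetric; hence it vanishes.
-/

open Equiv (Perm swap)

section SimpleReflections

variable {n : ℕ}

theorem simpleRefl_eq_swap {i : ℕ} (hi : i + 1 < n) :
    simpleRefl n i = swap ⟨i, Nat.lt_of_succ_lt hi⟩ ⟨i + 1, hi⟩ :=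
  dif_pos hi

theorem simpleRefl_eq_one {i : ℕ} (hi : ¬ i + 1 < n) : simpleRefl n i = 1 :=
  dif_neg hi

@[simp]
theorem simpleRefl_mul_self (i : ℕ) : simpleRefl n i * simpleRefl n i = 1 := by
  by_cases hi : i + 1 < n
  · rw [simpleRefl_eq_swap hi, Equiv.swap_mul_self]
  · rw [simpleRefl_eq_one hi, mul_one]

@[simp]
theorem simpleRefl_inv (i : ℕ) : (simpleRefl n i)⁻¹ = simpleRefl n i :=
  inv_eq_of_mul_eq_one_left (simpleRefl_mul_self i)

theorem mul_simpleRefl_mul_simpleRefl (w : Perm (Fin n)) (i : ℕ) :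
    w * simpleRefl n i * simpleRefl n i = w := by
  rw [mul_assoc, simpleRefl_mul_self, mul_one]

theorem simpleRefl_apply_simpleRefl_apply (i : ℕ) (k : Fin n) :
    simpleRefl n i (simpleRefl n i k) = k := by
  rw [← Perm.mul_apply, simpleRefl_mul_self, Perm.one_apply]

theorem val_simpleRefl_apply {i : ℕ} (hi : i + 1 < n) (k : Fin n) :
    (simpleRefl n i k : ℕ) = if (k : ℕ) = i then i + 1 else if (k : ℕ) = i + 1 then i else k := by
  rw [simpleRefl_eq_swap hi, Equiv.swap_apply_def]
  simp only [Fin.ext_iff]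
  split_ifs <;> rfl

theorem simpleRefl_apply_left {i : ℕ} (hi : i + 1 < n) :
    simpleRefl n i ⟨i, Nat.lt_of_succ_lt hi⟩ = ⟨i + 1, hi⟩ := by
  rw [simpleRefl_eq_swap hi, Equiv.swap_apply_left]

theorem simpleRefl_apply_right {i : ℕ} (hi : i + 1 < n) :
    simpleRefl n i ⟨i + 1, hi⟩ = ⟨i, Nat.lt_of_succ_lt hi⟩ := by
  rw [simpleRefl_eq_swap hi, Equiv.swap_apply_right]

theorem simpleRefl_apply_of_ne {i : ℕ} {k : Fin n} (h₁ : (k : ℕ) ≠ i) (h₂ : (k : ℕ) ≠ i + 1) :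
    simpleRefl n i k = k := by
  by_cases hi : i + 1 < n
  · rw [Fin.ext_iff, val_simpleRefl_apply hi, if_neg h₁, if_neg h₂]
  · rw [simpleRefl_eq_one hi, Perm.one_apply]

theorem simpleRefl_apply_lt_simpleRefl_apply {i : ℕ} {p q : Fin n}
    (h : ¬ ((p : ℕ) = i ∧ (q : ℕ) = i + 1)) (hpq : p < q) :
    simpleRefl n i p < simpleRefl n i q := by
  by_cases hi : i + 1 < n
  · rw [Fin.lt_def] at hpq ⊢
    rw [val_simpleRefl_apply hi, val_simpleRefl_apply hi]
    split_ifs <;> omega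
  · simpa only [simpleRefl_eq_one hi, Perm.one_apply] using hpq

theorem simpleRefl_mul_comm {i j : ℕ} (hij : i + 1 < j) :
    simpleRefl n i * simpleRefl n j = simpleRefl n j * simpleRefl n i := by
  by_cases hj : j + 1 < n
  · have hi : i + 1 < n := by omega
    ext k
    simp only [Perm.mul_apply, val_simpleRefl_apply hi, val_simpleRefl_apply hj]
    split_ifs <;> omega
  · rw [simpleRefl_eq_one hj, mul_one, one_mul]

theorem simpleRefl_braid {i : ℕ} (hi : i + 2 < n) :
    simpleRefl n i * simpleRefl n (i + 1) * simpleRefl n i =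
      simpleRefl n (i + 1) * simpleRefl n i * simpleRefl n (i + 1) := by
  have hi₁ : i + 1 < n := by omega
  ext k
  simp only [Perm.mul_apply, val_simpleRefl_apply hi₁, val_simpleRefl_apply hi]
  split_ifs <;> omega

end SimpleReflections

section Length

variable {n : ℕ}

/-- `i` is a right descent of `w`, i.e. `w(i) > w(i+1)`. The index is a natural number, as for
`simpleRefl`, and an out-of-range index is never a descent. -/
def HasDescent (w : Perm (Fin n)) (i : ℕ) : Prop :=
  ∃ hi : i + 1 < n, w ⟨i + 1, hi⟩ < w ⟨i, Nat.lt_of_succ_lt hi⟩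

theorem exists_hasDescent {w : Perm (Fin n)} (hw : w ≠ 1) : ∃ i, HasDescent w i := by
  contrapose! hw
  rw [← Equiv.Perm.monotone_iff]
  cases n with
  | zero => exact fun k => k.elim0
  | succ n =>
    rw [Fin.monotone_iff_le_succ]
    exact fun i => not_lt.mp fun h => hw i ⟨by omega, h⟩

theorem mem_invSet {w : Perm (Fin n)} {p q : Fin n} :
    (p, q) ∈ invSet n w ↔ p < q ∧ w q < w p := by
  simp [invSet]

theorem len_one : len n 1 = 0 := by
  rw [len, Finset.card_eq_zero, Finset.eq_empty_iff_forall_notMem]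
  rintro ⟨p, q⟩ h
  rw [mem_invSet] at h
  exact lt_asymm h.1 h.2

theorem len_inv (w : Perm (Fin n)) : len n w⁻¹ = len n w := by
  refine Finset.card_bij'
    (fun p _ => (w⁻¹ p.2, w⁻¹ p.1)) (fun p _ => (w p.2, w p.1)) ?_ ?_ ?_ ?_ <;>
    rintro ⟨p, q⟩ <;> simp +contextual [mem_invSet]

theorem len_w₀ : len n (w₀ n) = ∑ i : Fin n, (n - 1 - (i : ℕ)) := by
  rw [len, invSet, Finset.card_filter, Fintype.sum_prod_type]
  refine Finset.sum_congr rfl fun i _ => ?_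
  rw [← Finset.card_filter, ← Fin.card_Ioi]
  congr 1
  ext j
  simp [w₀]

theorem invSet_mul_simpleRefl {w : Perm (Fin n)} {i : ℕ} (hi : i + 1 < n)
    (h : w ⟨i, Nat.lt_of_succ_lt hi⟩ < w ⟨i + 1, hi⟩) :
    invSet n (w * simpleRefl n i) = insert (⟨i, Nat.lt_of_succ_lt hi⟩, ⟨i + 1, hi⟩)
      ((invSet n w).map ((simpleRefl n i).prodCongr (simpleRefl n i)).toEmbedding) := by
  have hsymm : (simpleRefl n i).symm = simpleRefl n i := simpleRefl_inv i
  ext ⟨p, q⟩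
  simp only [Finset.mem_insert, Finset.mem_map_equiv, Equiv.prodCongr_symm, hsymm,
    Equiv.prodCongr_apply, Prod.map_apply, mem_invSet, Perm.mul_apply, Prod.mk.injEq]
  by_cases hpq : (p : ℕ) = i ∧ (q : ℕ) = i + 1
  · obtain ⟨rfl, hq⟩ := hpq
    obtain rfl : q = ⟨p + 1, hi⟩ := Fin.ext hq
    simpa [simpleRefl_apply_left hi, simpleRefl_apply_right hi] using
      show p < ⟨p + 1, hi⟩ ∧ w p < w ⟨p + 1, hi⟩ from ⟨Nat.lt_succ_self p.1, h⟩
  · simp only [Fin.ext_iff, hpq, false_or]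
    refine and_congr_left fun hw => ⟨simpleRefl_apply_lt_simpleRefl_apply hpq, fun hs => ?_⟩
    have hs_ne : ¬ ((simpleRefl n i p : ℕ) = i ∧ (simpleRefl n i q : ℕ) = i + 1) := fun hs' => by
      rw [show simpleRefl n i p = ⟨i, Nat.lt_of_succ_lt hi⟩ from Fin.ext hs'.1,
        show simpleRefl n i q = ⟨i + 1, hi⟩ from Fin.ext hs'.2] at hw
      exact hw.not_gt h
    simpa only [simpleRefl_apply_simpleRefl_apply] using
      simpleRefl_apply_lt_simpleRefl_apply hs_ne hs

theorem len_mul_simpleRefl_of_lt {w : Perm (Fin n)} {i : ℕ} (hi : i + 1 < n)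
    (h : w ⟨i, Nat.lt_of_succ_lt hi⟩ < w ⟨i + 1, hi⟩) :
    len n (w * simpleRefl n i) = len n w + 1 := by
  have hsymm : (simpleRefl n i).symm = simpleRefl n i := simpleRefl_inv i
  rw [len, invSet_mul_simpleRefl hi h, Finset.card_insert_of_notMem, Finset.card_map, len]
  rw [Finset.mem_map_equiv, Equiv.prodCongr_symm, hsymm, Equiv.prodCongr_apply, Prod.map_apply,
    simpleRefl_apply_left hi, simpleRefl_apply_right hi, mem_invSet]
  exact fun h' => (Nat.lt_succ_self i).not_gt h'.1

theorem HasDescent.len_mul_simpleRefl {w : Perm (Fin n)} {i : ℕ} (h : HasDescent w i) :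
    len n (w * simpleRefl n i) + 1 = len n w := by
  obtain ⟨hi, hw⟩ := h
  have := len_mul_simpleRefl_of_lt (w := w * simpleRefl n i) hi
    (by simpa [simpleRefl_apply_left hi, simpleRefl_apply_right hi] using hw)
  rw [mul_simpleRefl_mul_simpleRefl] at this
  exact this.symm

theorem len_mul_simpleRefl_of_not_hasDescent {w : Perm (Fin n)} {i : ℕ} (hi : i + 1 < n)
    (h : ¬ HasDescent w i) : len n (w * simpleRefl n i) = len n w + 1 :=
  len_mul_simpleRefl_of_lt hi <|
    (not_lt.mp fun hw => h ⟨hi, hw⟩).lt_of_ne fun hw => by simpa using w.injective hw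

theorem len_mul_simpleRefl_lt_iff {w : Perm (Fin n)} {i : ℕ} :
    len n (w * simpleRefl n i) < len n w ↔ HasDescent w i := by
  refine ⟨fun h => ?_, fun h => by have := h.len_mul_simpleRefl; omega⟩
  by_contra hd
  by_cases hi : i + 1 < n
  · have := len_mul_simpleRefl_of_not_hasDescent hi hd
    omega
  · rw [simpleRefl_eq_one hi, mul_one] at h
    exact h.false

theorem len_mul_simpleRefl_le (w : Perm (Fin n)) (i : ℕ) :
    len n (w * simpleRefl n i) ≤ len n w + 1 := by
  by_cases hi : i + 1 < n
  · by_cases hd : HasDescent w i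
    · have := hd.len_mul_simpleRefl
      omega
    · exact (len_mul_simpleRefl_of_not_hasDescent hi hd).le
  · rw [simpleRefl_eq_one hi, mul_one]
    exact Nat.le_succ _

theorem len_simpleRefl_mul (w : Perm (Fin n)) (i : ℕ) :
    len n (simpleRefl n i * w) = len n (w⁻¹ * simpleRefl n i) := by
  rw [← len_inv, mul_inv_rev, simpleRefl_inv]

theorem len_eq_zero {w : Perm (Fin n)} : len n w = 0 ↔ w = 1 := by
  refine ⟨fun h => ?_, fun h => h ▸ len_one⟩
  by_contra hw
  obtain ⟨i, hi⟩ := exists_hasDescent hw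
  have := hi.len_mul_simpleRefl
  omega

theorem perm_induction {P : Perm (Fin n) → Prop} (one : P 1)
    (mul_simpleRefl : ∀ w i, i + 1 < n → len n (w * simpleRefl n i) = len n w + 1 → P w →
      P (w * simpleRefl n i)) (w : Perm (Fin n)) : P w := by
  induction hk : len n w generalizing w with
  | zero => exact len_eq_zero.mp hk ▸ one
  | succ k ih =>
    obtain ⟨i, hd⟩ := exists_hasDescent (w := w) fun hw => by simp [len_eq_zero.mpr hw] at hk
    have hlen := hd.len_mul_simpleRefl
    rw [← mul_simpleRefl_mul_simpleRefl w i]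
    refine mul_simpleRefl _ i hd.1 ?_ (ih _ (by omega))
    rw [mul_simpleRefl_mul_simpleRefl, hlen]

theorem len_mul_le (u v : Perm (Fin n)) : len n (u * v) ≤ len n u + len n v := by
  induction v using perm_induction with
  | one => simp
  | mul_simpleRefl v i _ hlen ih =>
    rw [hlen, ← mul_assoc]
    have := len_mul_simpleRefl_le (u * v) i
    omega

theorem w₀_mul_induction {P : Perm (Fin n) → Prop} (w₀ : P (w₀ n))
    (mul_simpleRefl : ∀ w i, HasDescent w i → P w → P (w * simpleRefl n i))
    (w : Perm (Fin n)) : P w := by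
  suffices h : ∀ v, P (_root_.w₀ n * v) by
    simpa using h ((_root_.w₀ n)⁻¹ * w)
  intro v
  induction v using perm_induction with
  | one => rwa [mul_one]
  | mul_simpleRefl v i hi hlen ih =>
    rw [← mul_assoc]
    refine mul_simpleRefl _ i ⟨hi, ?_⟩ ih
    have hasc : v ⟨i, Nat.lt_of_succ_lt hi⟩ < v ⟨i + 1, hi⟩ :=
      (not_lt.mp fun hw => by
        have := HasDescent.len_mul_simpleRefl ⟨hi, hw⟩
        omega).lt_of_ne fun hw => by simpa using v.injective hw
    simpa [_root_.w₀] using hasc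

end Length

section ReducedWords

variable {n : ℕ}

theorem len_prod_map_simpleRefl_le (l : List ℕ) :
    len n (l.map (simpleRefl n)).prod ≤ l.length := by
  induction l with
  | nil => simp [len_one]
  | cons i l ih =>
    rw [List.map_cons, List.prod_cons, List.length_cons, len_simpleRefl_mul]
    refine (len_mul_simpleRefl_le _ i).trans ?_
    rwa [len_inv, Nat.add_le_add_iff_right]

theorem isReducedWord_inv_cons_iff {w : Perm (Fin n)} {i : ℕ} {l : List ℕ} :
    IsReducedWord n w⁻¹ (i :: l) ↔
      HasDescent w i ∧ IsReducedWord n (w * simpleRefl n i)⁻¹ l := by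
  simp only [IsReducedWord, List.map_cons, List.prod_cons, List.length_cons, len_inv, mul_inv_rev,
    simpleRefl_inv]
  constructor
  · rintro ⟨hprod, hlength⟩
    have hl : (l.map (simpleRefl n)).prod = simpleRefl n i * w⁻¹ := by
      rw [← hprod, ← mul_assoc, simpleRefl_mul_self, one_mul]
    have hle := len_prod_map_simpleRefl_le (n := n) l
    rw [hl, len_simpleRefl_mul, inv_inv] at hle
    have hd : HasDescent w i := len_mul_simpleRefl_lt_iff.mp (by omega)
    have := hd.len_mul_simpleRefl
    exact ⟨hd, hl, by rw [len_simpleRefl_mul, inv_inv]; omega⟩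
  · rintro ⟨hd, hprod, hlength⟩
    rw [hlength, len_simpleRefl_mul, inv_inv, hprod, ← mul_assoc, simpleRefl_mul_self, one_mul]
    exact ⟨rfl, hd.len_mul_simpleRefl⟩

theorem exists_isReducedWord (w : Perm (Fin n)) : ∃ l, IsReducedWord n w l := by
  suffices h : ∃ l, IsReducedWord n w⁻¹⁻¹ l by rwa [inv_inv] at h
  induction w⁻¹ using perm_induction with
  | one => exact ⟨[], by simp, by simp [len_one]⟩
  | mul_simpleRefl w i _ hlen ih =>
    obtain ⟨l, hl⟩ := ih
    refine ⟨i :: l, isReducedWord_inv_cons_iff.mpr ⟨len_mul_simpleRefl_lt_iff.mp ?_, ?_⟩⟩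
    · rw [mul_simpleRefl_mul_simpleRefl]
      omega
    · rwa [mul_simpleRefl_mul_simpleRefl]

theorem HasDescent.exists_isReducedWord_comm {w : Perm (Fin n)} {i j : ℕ} (hi : HasDescent w i)
    (hj : HasDescent w j) (hij : i + 1 < j) :
    ∃ m, IsReducedWord n w⁻¹ (i :: j :: m) ∧ IsReducedWord n w⁻¹ (j :: i :: m) := by
  obtain ⟨m, hm⟩ := exists_isReducedWord (w * simpleRefl n i * simpleRefl n j)⁻¹
  have hm' : IsReducedWord n (w * simpleRefl n j * simpleRefl n i)⁻¹ m := by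
    rwa [mul_assoc, ← simpleRefl_mul_comm hij, ← mul_assoc]
  simp only [isReducedWord_inv_cons_iff]
  refine ⟨m, ⟨hi, ⟨hj.1, ?_⟩, hm⟩, hj, ⟨hi.1, ?_⟩, hm'⟩ <;> rw [Perm.mul_apply, Perm.mul_apply]
  · rw [simpleRefl_apply_of_ne, simpleRefl_apply_of_ne]
    · exact hj.2
    all_goals simp only [ne_eq]; omega
  · rw [simpleRefl_apply_of_ne, simpleRefl_apply_of_ne]
    · exact hi.2
    all_goals simp only [ne_eq]; omega

theorem HasDescent.exists_isReducedWord_braid {w : Perm (Fin n)} {i : ℕ} (hi : HasDescent w i)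
    (hj : HasDescent w (i + 1)) :
    ∃ m, IsReducedWord n w⁻¹ (i :: (i + 1) :: i :: m) ∧
      IsReducedWord n w⁻¹ ((i + 1) :: i :: (i + 1) :: m) := by
  obtain ⟨hi₁, hwi⟩ := hi
  obtain ⟨hi₂, hwj⟩ := hj
  have s_left := simpleRefl_apply_left hi₁
  have s_right := simpleRefl_apply_right hi₁
  have t_left := simpleRefl_apply_left hi₂
  have t_right := simpleRefl_apply_right hi₂
  have s_fix : simpleRefl n i ⟨i + 1 + 1, hi₂⟩ = ⟨i + 1 + 1, hi₂⟩ :=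
    simpleRefl_apply_of_ne (by simp only [ne_eq]; omega) (by simp)
  have t_fix : simpleRefl n (i + 1) ⟨i, Nat.lt_of_succ_lt hi₁⟩ = ⟨i, Nat.lt_of_succ_lt hi₁⟩ :=
    simpleRefl_apply_of_ne (by simp) (by simp only [ne_eq]; omega)
  obtain ⟨m, hm⟩ :=
    exists_isReducedWord (w * simpleRefl n i * simpleRefl n (i + 1) * simpleRefl n i)⁻¹
  have hm' :
      IsReducedWord n (w * simpleRefl n (i + 1) * simpleRefl n i * simpleRefl n (i + 1))⁻¹ m := by
    have hbraid := congrArg (w * ·) (simpleRefl_braid hi₂)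
    simp only [← mul_assoc] at hbraid
    rwa [← hbraid]
  simp only [isReducedWord_inv_cons_iff]
  refine ⟨m, ⟨⟨hi₁, hwi⟩, ⟨hi₂, ?_⟩, ⟨hi₁, ?_⟩, hm⟩, ⟨hi₂, hwj⟩, ⟨hi₁, ?_⟩, ⟨hi₂, ?_⟩, hm'⟩ <;>
    simp only [Perm.mul_apply, s_left, s_right, s_fix, t_left, t_right, t_fix]
  · exact hwj.trans hwi
  · exact hwj
  · exact hwj.trans hwi
  · exact hwi

/-- Matsumoto's theorem for the symmetric group: two descents `i < j` of `w` allow reduced words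
beginning with the two sides of the braid relation between `i` and `j`, which are compared with
the given words by induction. -/
theorem IsReducedWord.prod_map_eq {M : Type*} [Monoid M] {f : ℕ → M}
    (hcomm : ∀ i j, i + 1 < j → j + 1 < n → f i * f j = f j * f i)
    (hbraid : ∀ i, i + 2 < n → f i * f (i + 1) * f i = f (i + 1) * f i * f (i + 1))
    {w : Perm (Fin n)} {l l' : List ℕ} (hl : IsReducedWord n w l) (hl' : IsReducedWord n w l') :
    (l.map f).prod = (l'.map f).prod := by
  induction hk : l.length generalizing w l l' with
  | zero =>
    have hk' : l'.length = 0 := by rw [hl'.2, ← hl.2, hk]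
    rw [List.length_eq_zero_iff.mp hk, List.length_eq_zero_iff.mp hk']
  | succ k ih =>
    obtain ⟨v, rfl⟩ : ∃ v, w = v⁻¹ := ⟨w⁻¹, (inv_inv w).symm⟩
    have tail_eq {i : ℕ} {m m' : List ℕ} (hm : IsReducedWord n v⁻¹ (i :: m))
        (hm' : IsReducedWord n v⁻¹ (i :: m')) : (m.map f).prod = (m'.map f).prod := by
      refine ih (isReducedWord_inv_cons_iff.mp hm).2 (isReducedWord_inv_cons_iff.mp hm').2 ?_
      have hlength : (i :: m).length = k + 1 := by rw [hm.2, ← hl.2, hk]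
      exact Nat.succ_injective hlength
    obtain ⟨i, l, rfl⟩ := List.exists_cons_of_length_eq_add_one hk
    obtain ⟨j, l', rfl⟩ := List.exists_cons_of_length_eq_add_one (hl'.2.trans (hl.2.symm.trans hk))
    wlog hij : i ≤ j generalizing i j l l'
    · exact (this j l' (hl'.2.trans (hl.2.symm.trans hk)) hl' i l hl (by omega)).symm
    have hi := (isReducedWord_inv_cons_iff.mp hl).1
    have hj := (isReducedWord_inv_cons_iff.mp hl').1
    rw [List.map_cons, List.prod_cons, List.map_cons, List.prod_cons]
    rcases Nat.lt_trichotomy j (i + 1) with hlt | rfl | hgt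
    · obtain rfl : i = j := by omega
      rw [tail_eq hl hl']
    · obtain ⟨m, hm, hm'⟩ := hi.exists_isReducedWord_braid hj
      rw [tail_eq hl hm, tail_eq hl' hm']
      simp only [List.map_cons, List.prod_cons, ← mul_assoc, hbraid i hj.1]
    · obtain ⟨m, hm, hm'⟩ := hi.exists_isReducedWord_comm hj hgt
      rw [tail_eq hl hm, tail_eq hl' hm']
      simp only [List.map_cons, List.prod_cons, ← mul_assoc, hcomm i j hgt hj.1]

end ReducedWords

section Polynomials

variable {σ A : Type*} [CommRing A]

theorem mem_of_mul_mem_of_mem_left {ι B S : Type*} [DecidableEq ι]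
    [AddLeftCancelMonoid ι] [Ring B] [NoZeroDivisors B] [SetLike S B] [AddSubmonoidClass S B]
    (𝒜 : ι → S) [GradedRing 𝒜] {i j : ι} {a b : B} (ha : a ∈ 𝒜 i) (ha₀ : a ≠ 0)
    (hab : a * b ∈ 𝒜 (i + j)) : b ∈ 𝒜 j := by
  have h := DirectSum.coe_decompose_mul_add_of_left_mem 𝒜 (j := j) (b := b) ha
  rw [DirectSum.decompose_of_mem_same 𝒜 hab] at h
  rw [mul_left_cancel₀ ha₀ h]
  exact SetLike.coe_mem _

theorem isHomogeneous_of_mul_left [NoZeroDivisors A] {d e : ℕ} {p q : MvPolynomial σ A}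
    (hp : p.IsHomogeneous d) (hp₀ : p ≠ 0) (hpq : (p * q).IsHomogeneous (d + e)) :
    q.IsHomogeneous e := by
  let := MvPolynomial.gradedAlgebra (σ := σ) (R := A)
  exact mem_of_mul_mem_of_mem_left (homogeneousSubmodule σ A) hp hp₀ hpq

theorem aeval_neg_X_of_isHomogeneous {d : ℕ} {p : MvPolynomial σ A} (hp : p.IsHomogeneous d) :
    aeval (fun i => -(X i : MvPolynomial σ A)) p = (-1) ^ d * p := by
  conv_rhs => rw [p.as_sum, Finset.mul_sum]
  rw [aeval_def, eval₂_eq]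
  refine Finset.sum_congr rfl fun m hm => ?_
  have hdeg : ∑ i ∈ m.support, m i = d := (hp.degree_eq_sum_deg_support hm).symm
  simp_rw [neg_pow (X _ : MvPolynomial σ A)]
  rw [Finset.prod_mul_distrib, Finset.prod_pow_eq_pow_sum, hdeg, monomial_eq, algebraMap_eq]
  exact mul_left_comm _ _ _

theorem X_sub_X_dvd_sub_rename_swap [DecidableEq σ] (a b : σ) (p : MvPolynomial σ A) :
    (X a - X b : MvPolynomial σ A) ∣ p - rename (swap a b) p := by
  rw [← Ideal.mem_span_singleton, ← Ideal.Quotient.eq]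
  set π := Ideal.Quotient.mkₐ A (Ideal.span {(X a - X b : MvPolynomial σ A)})
  have hab : π (X a) = π (X b) := Ideal.Quotient.eq.mpr (Ideal.mem_span_singleton_self _)
  have hπ : π = π.comp (rename (swap a b)) := by
    ext k
    rw [AlgHom.comp_apply, rename_X, Equiv.swap_apply_def]
    split_ifs with hka hkb
    · rw [hka, hab]
    · rw [hkb, hab]
    · rfl
  exact DFunLike.congr_fun hπ p

theorem rename_perm_mul (u w : Perm σ) (p : MvPolynomial σ A) :
    rename (u * w) p = rename u (rename w p) := by
  rw [rename_rename, Perm.coe_mul]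

theorem rename_perm_one (p : MvPolynomial σ A) : rename (1 : Perm σ) p = p := by
  rw [Perm.coe_one, rename_id_apply]

theorem degreeOf_rename_perm (w : Perm σ) (k : σ) (p : MvPolynomial σ A) :
    degreeOf k (rename w p) = degreeOf (w⁻¹ k) p := by
  conv_lhs => rw [← w.apply_symm_apply k]
  exact degreeOf_rename_of_injective w.injective _

theorem degreeOf_X_sub_X_left [Nontrivial A] {a b : σ} (hab : a ≠ b) :
    degreeOf a (X a - X b : MvPolynomial σ A) = 1 := by
  rw [sub_eq_add_neg, degreeOf_add_eq_of_degreeOf_lt, degreeOf_X_self]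
  rw [degreeOf_neg, degreeOf_X_of_ne hab, degreeOf_X_self]
  exact Nat.one_pos

theorem X_sub_X_ne_zero [Nontrivial A] {a b : σ} (hab : a ≠ b) :
    (X a - X b : MvPolynomial σ A) ≠ 0 :=
  sub_ne_zero.mpr fun h => hab (X_injective h)

theorem eq_C_of_isSymmetric_of_degreeOf_eq_zero {p : MvPolynomial σ A} (hp : p.IsSymmetric) {k : σ}
    (hk : degreeOf k p = 0) : p = C (coeff 0 p) := by
  classical
  rw [← vars_eq_empty_iff_eq_C, Finset.eq_empty_iff_forall_notMem]
  intro l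
  rw [mem_vars_iff_degreeOf_ne_zero, not_not]
  rw [← hp (swap k l), degreeOf_rename_perm, Equiv.swap_inv, Equiv.swap_apply_right, hk]

end Polynomials

theorem eq_zero_of_mem_span_of_triangular {ι κ K M : Type*} [Semiring K] [NoZeroDivisors K]
    [AddCommMonoid M] [Module K M] [LinearOrder κ] (ℓ : ι → κ) {S : ι → M} {F : ι → M →ₗ[K] K}
    (hF : ∀ i j, ℓ i ≤ ℓ j → i ≠ j → F i (S j) = 0) (hF' : ∀ i, F i (S i) ≠ 0) {s : Set ι} {z : M}
    (hz : z ∈ Submodule.span K (S '' s)) (hFz : ∀ i ∈ s, F i z = 0) : z = 0 := by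
  obtain ⟨c, hcs, rfl⟩ := (Finsupp.mem_span_image_iff_linearCombination K).mp hz
  rw [Finsupp.mem_supported] at hcs
  by_contra hne
  have hc : c.support.Nonempty := by
    rw [Finsupp.support_nonempty_iff]
    rintro rfl
    exact hne (map_zero _)
  obtain ⟨i, hi, hmin⟩ := c.support.exists_min_image ℓ hc
  have hval : F i (Finsupp.linearCombination K S c) = c i * F i (S i) := by
    rw [Finsupp.linearCombination_apply, map_finsuppSum, Finsupp.sum]
    simp only [map_smul, smul_eq_mul]
    refine Finset.sum_eq_single i (fun j hj hji => ?_) fun h => absurd hi h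
    rw [hF i j (hmin j hj) hji.symm, mul_zero]
  exact mul_ne_zero (Finsupp.mem_support_iff.mp hi) (hF' i) (hval ▸ hFz i (hcs hi))

section DemazureOperators

variable {n : ℕ}

/-- The simple root `x_i - x_{i+1}`. For out-of-range indices it is `0`, matching the conventions
for `simpleRefl` and `demX`. -/
def simpleRoot (n i : ℕ) : R n :=
  if hi : i + 1 < n then X ⟨i, Nat.lt_of_succ_lt hi⟩ - X ⟨i + 1, hi⟩ else 0

theorem simpleRoot_eq_X_sub_X {i : ℕ} (hi : i + 1 < n) :
    simpleRoot n i = X ⟨i, Nat.lt_of_succ_lt hi⟩ - X ⟨i + 1, hi⟩ :=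
  dif_pos hi

theorem simpleRoot_eq_zero {i : ℕ} (hi : ¬ i + 1 < n) : simpleRoot n i = 0 :=
  dif_neg hi

theorem simpleRoot_ne_zero {i : ℕ} (hi : i + 1 < n) : simpleRoot n i ≠ 0 := by
  rw [simpleRoot_eq_X_sub_X hi]
  exact X_sub_X_ne_zero (by simp)

theorem simpleRoot_isHomogeneous (i : ℕ) : (simpleRoot n i).IsHomogeneous 1 := by
  by_cases hi : i + 1 < n
  · rw [simpleRoot_eq_X_sub_X hi]
    exact (isHomogeneous_X _ _).sub (isHomogeneous_X _ _)
  · rw [simpleRoot_eq_zero hi]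
    exact isHomogeneous_zero _ _ _

theorem rename_simpleRoot_self (i : ℕ) :
    rename (simpleRefl n i) (simpleRoot n i) = -simpleRoot n i := by
  by_cases hi : i + 1 < n
  · rw [simpleRoot_eq_X_sub_X hi, map_sub, rename_X, rename_X, simpleRefl_apply_left hi,
      simpleRefl_apply_right hi, neg_sub]
  · rw [simpleRoot_eq_zero hi, map_zero, neg_zero]

theorem rename_simpleRoot_succ {i : ℕ} (hi : i + 2 < n) :
    rename (simpleRefl n i) (simpleRoot n (i + 1)) = simpleRoot n i + simpleRoot n (i + 1) := by
  rw [simpleRoot_eq_X_sub_X hi, simpleRoot_eq_X_sub_X (Nat.lt_of_succ_lt hi), map_sub, rename_X,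
    rename_X, simpleRefl_apply_right (Nat.lt_of_succ_lt hi), sub_add_sub_cancel,
    simpleRefl_apply_of_ne (by simp only [ne_eq]; omega) (by simp)]

theorem rename_succ_simpleRoot {i : ℕ} (hi : i + 2 < n) :
    rename (simpleRefl n (i + 1)) (simpleRoot n i) = simpleRoot n i + simpleRoot n (i + 1) := by
  rw [simpleRoot_eq_X_sub_X hi, simpleRoot_eq_X_sub_X (Nat.lt_of_succ_lt hi), map_sub, rename_X,
    rename_X, simpleRefl_apply_left hi, sub_add_sub_cancel,
    simpleRefl_apply_of_ne (by simp) (by simp only [ne_eq]; omega)]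

theorem rename_simpleRoot_of_far {i j : ℕ} (hij : i + 1 < j ∨ j + 1 < i) :
    rename (simpleRefl n i) (simpleRoot n j) = simpleRoot n j := by
  by_cases hj : j + 1 < n
  · rw [simpleRoot_eq_X_sub_X hj, map_sub, rename_X, rename_X, simpleRefl_apply_of_ne,
      simpleRefl_apply_of_ne]
    all_goals simp only [ne_eq]; omega
  · rw [simpleRoot_eq_zero hj, map_zero]

theorem rename_simpleRefl_rename_simpleRefl (i : ℕ) (f : R n) :
    rename (simpleRefl n i) (rename (simpleRefl n i) f) = f := by
  rw [← rename_perm_mul, simpleRefl_mul_self, rename_perm_one]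

theorem simpleRoot_mul_demX (i : ℕ) (f : R n) :
    simpleRoot n i * demX n i f = f - rename (simpleRefl n i) f := by
  by_cases hi : i + 1 < n
  · rw [simpleRoot_eq_X_sub_X hi, simpleRefl_eq_swap hi, demX, dif_pos hi]
    have hdvd := X_sub_X_dvd_sub_rename_swap ⟨i, Nat.lt_of_succ_lt hi⟩ ⟨i + 1, hi⟩ f
    rw [dif_pos hdvd]
    exact hdvd.choose_spec.symm
  · rw [simpleRoot_eq_zero hi, zero_mul, simpleRefl_eq_one hi, rename_perm_one, sub_self]

theorem demX_eq_of_simpleRoot_mul_eq {i : ℕ} (hi : i + 1 < n) {f g : R n}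
    (h : simpleRoot n i * g = f - rename (simpleRefl n i) f) : demX n i f = g :=
  mul_left_cancel₀ (simpleRoot_ne_zero hi) ((simpleRoot_mul_demX i f).trans h.symm)

theorem demX_eq_zero_of_not_lt {i : ℕ} (hi : ¬ i + 1 < n) (f : R n) : demX n i f = 0 :=
  dif_neg hi

theorem demX_eq_zero_of_rename_eq {i : ℕ} {f : R n} (h : rename (simpleRefl n i) f = f) :
    demX n i f = 0 := by
  by_cases hi : i + 1 < n
  · exact demX_eq_of_simpleRoot_mul_eq hi (by rw [h, sub_self, mul_zero])
  · exact demX_eq_zero_of_not_lt hi f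

theorem rename_demX (i : ℕ) (f : R n) : rename (simpleRefl n i) (demX n i f) = demX n i f := by
  by_cases hi : i + 1 < n
  · symm
    refine demX_eq_of_simpleRoot_mul_eq hi ?_
    have h := congrArg (rename (simpleRefl n i)) (simpleRoot_mul_demX i f)
    rw [map_mul, rename_simpleRoot_self, map_sub, rename_simpleRefl_rename_simpleRefl] at h
    linear_combination -h
  · rw [demX_eq_zero_of_not_lt hi, map_zero]

theorem demX_demX (i : ℕ) (f : R n) : demX n i (demX n i f) = 0 :=
  demX_eq_zero_of_rename_eq (rename_demX i f)

theorem demX_mul_of_rename_eq {i : ℕ} {g : R n} (hg : rename (simpleRefl n i) g = g) (f : R n) :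
    demX n i (f * g) = demX n i f * g := by
  by_cases hi : i + 1 < n
  · refine demX_eq_of_simpleRoot_mul_eq hi ?_
    rw [← mul_assoc, simpleRoot_mul_demX, map_mul, hg, sub_mul]
  · simp only [demX_eq_zero_of_not_lt hi, zero_mul]

theorem simpleRoot_mul_simpleRoot_mul_demX_demX {i j : ℕ} (hij : i + 1 < j ∨ j + 1 < i)
    (f : R n) :
    simpleRoot n i * simpleRoot n j * demX n i (demX n j f) =
      f - rename (simpleRefl n i) f - rename (simpleRefl n j) f +
        rename (simpleRefl n i * simpleRefl n j) f := by
  have hj := simpleRoot_mul_demX j f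
  have hrename := congrArg (rename (simpleRefl n i)) hj
  rw [map_mul, map_sub, rename_simpleRoot_of_far hij, ← rename_perm_mul] at hrename
  linear_combination simpleRoot n j * simpleRoot_mul_demX i (demX n j f) + hj - hrename

theorem demX_comm {i j : ℕ} (hij : i + 1 < j) (hj : j + 1 < n) (f : R n) :
    demX n i (demX n j f) = demX n j (demX n i f) := by
  refine mul_left_cancel₀ (mul_ne_zero (simpleRoot_ne_zero (n := n) (i := i) (by omega))
    (simpleRoot_ne_zero hj)) ?_
  rw [simpleRoot_mul_simpleRoot_mul_demX_demX (.inl hij), mul_comm (simpleRoot n i),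
    simpleRoot_mul_simpleRoot_mul_demX_demX (.inr hij), simpleRefl_mul_comm hij]
  ring

/-- With `h = ∂_s f`, `g = ∂_t h` and `k = ∂_s g` for the reflections `s`, `t` in the simple roots
`p`, `q`, this computes `∂_s ∂_t ∂_s f` as the antisymmetrization of `f` divided by the product of
the positive roots. -/
theorem mul_eq_antisymmetrization {A F : Type*} [CommRing A] [FunLike F A A] [RingHomClass F A A]
    {s t : F} {p q f g h k : A} (hsp : s p = -p) (hsq : s q = p + q) (htp : t p = p + q)
    (hh : p * h = f - s f) (hsh : s h = h) (hg : q * g = h - t h) (hk : p * k = g - s g) :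
    p * q * (p + q) * k =
      f - s f - t f + s (t f) + t (s f) - s (t (s f)) := by
  have hsg : (p + q) * s g = h - s (t h) := by
    rw [← hsq, ← map_mul, hg, map_sub, hsh]
  have hth : (p + q) * t h = t f - t (s f) := by
    rw [← htp, ← map_mul, hh, map_sub]
  have hsth : q * s (t h) = s (t f) - s (t (s f)) := by
    rw [← map_sub, ← hth, map_mul, map_add, hsp, hsq, neg_add_cancel_left]
  linear_combination q * (p + q) * hk + (p + q) * hg - q * hsg + hh - hth + hsth

theorem demX_braid {i : ℕ} (hi : i + 2 < n) (f : R n) :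
    demX n i (demX n (i + 1) (demX n i f)) = demX n (i + 1) (demX n i (demX n (i + 1) f)) := by
  have hi₁ : i + 1 < n := Nat.lt_of_succ_lt hi
  set p := simpleRoot n i
  set q := simpleRoot n (i + 1)
  have hs_ne : p + q ≠ 0 := by
    rw [← rename_simpleRoot_succ hi]
    exact (map_ne_zero_iff _ (rename_injective _ (simpleRefl n i).injective)).mpr
      (simpleRoot_ne_zero hi)
  have hsts := mul_eq_antisymmetrization (rename_simpleRoot_self i) (rename_simpleRoot_succ hi)
    (rename_succ_simpleRoot hi) (simpleRoot_mul_demX i f) (rename_demX i f)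
    (simpleRoot_mul_demX (i + 1) _) (simpleRoot_mul_demX i _)
  have htst := mul_eq_antisymmetrization (rename_simpleRoot_self (i + 1))
    ((rename_succ_simpleRoot hi).trans (add_comm _ _))
    ((rename_simpleRoot_succ hi).trans (add_comm _ _)) (simpleRoot_mul_demX (i + 1) f)
    (rename_demX (i + 1) f) (simpleRoot_mul_demX i _) (simpleRoot_mul_demX (i + 1) _)
  refine mul_left_cancel₀
    (mul_ne_zero (mul_ne_zero (simpleRoot_ne_zero hi₁) (simpleRoot_ne_zero hi)) hs_ne) ?_
  have hbraid := congrArg (fun w : Perm (Fin n) => rename w f) (simpleRefl_braid hi)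
  simp only [rename_perm_mul] at hbraid
  linear_combination hsts - htst - hbraid

theorem demWord_eq_prod (l : List ℕ) :
    demWord n l = (l.map (β := Function.End (R n)) (demX n)).prod := by
  induction l with
  | nil => rfl
  | cons i l ih => exact congrArg (demX n i ∘ ·) ih

theorem IsReducedWord.demWord_eq {w : Perm (Fin n)} {l : List ℕ} (hl : IsReducedWord n w l) :
    demWord n l = dem n w := by
  have h : ∃ l, IsReducedWord n w l := ⟨l, hl⟩
  rw [dem, dif_pos h, demWord_eq_prod, demWord_eq_prod]
  exact hl.prod_map_eq (M := Function.End (R n)) (fun i j hij hj => funext (demX_comm hij hj))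
    (fun i hi => funext (demX_braid hi)) h.choose_spec

theorem HasDescent.dem_inv {w : Perm (Fin n)} {i : ℕ} (h : HasDescent w i) (f : R n) :
    dem n w⁻¹ f = demX n i (dem n (w * simpleRefl n i)⁻¹ f) := by
  obtain ⟨l, hl⟩ := exists_isReducedWord (w * simpleRefl n i)⁻¹
  rw [← hl.demWord_eq, ← (isReducedWord_inv_cons_iff.mpr ⟨h, hl⟩).demWord_eq]
  rfl

end DemazureOperators

section SchubertPolynomials

variable {n : ℕ}

theorem schubert_w₀ : schubert n (w₀ n) = staircase n := by
  rw [schubert, inv_mul_cancel,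
    ← IsReducedWord.demWord_eq (w := 1) (l := []) ⟨rfl, len_one.symm⟩]
  rfl

theorem HasDescent.demX_schubert {u : Perm (Fin n)} {i : ℕ} (h : HasDescent u i) :
    demX n i (schubert n u) = schubert n (u * simpleRefl n i) := by
  have hd : HasDescent ((w₀ n)⁻¹ * (u * simpleRefl n i)) i := by
    obtain ⟨hi, hu⟩ := h
    refine ⟨hi, ?_⟩
    simp only [Perm.mul_apply, simpleRefl_apply_left hi, simpleRefl_apply_right hi]
    exact Fin.rev_lt_rev.mpr hu
  have hdem := hd.dem_inv (staircase n)
  rw [← mul_assoc, mul_simpleRefl_mul_simpleRefl, mul_assoc, mul_inv_rev, mul_inv_rev,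
    inv_inv] at hdem
  exact hdem.symm

theorem demX_schubert (u : Perm (Fin n)) (i : ℕ) :
    demX n i (schubert n u) =
      if len n (u * simpleRefl n i) < len n u then schubert n (u * simpleRefl n i) else 0 := by
  split_ifs with hd <;> rw [len_mul_simpleRefl_lt_iff] at hd
  · exact hd.demX_schubert
  by_cases hi : i + 1 < n
  · have hd' : HasDescent (u * simpleRefl n i) i := by
      rw [← len_mul_simpleRefl_lt_iff, mul_simpleRefl_mul_simpleRefl,
        len_mul_simpleRefl_of_not_hasDescent hi hd]
      exact Nat.lt_succ_self _
    have hu := hd'.demX_schubert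
    rw [mul_simpleRefl_mul_simpleRefl] at hu
    rw [← hu, demX_demX]
  · exact demX_eq_zero_of_not_lt hi _

theorem isHomogeneous_demX {d i : ℕ} {f : R n} (hf : f.IsHomogeneous (d + 1)) :
    (demX n i f).IsHomogeneous d := by
  by_cases hi : i + 1 < n
  · refine isHomogeneous_of_mul_left (simpleRoot_isHomogeneous i) (simpleRoot_ne_zero hi) ?_
    rw [simpleRoot_mul_demX, add_comm]
    exact hf.sub hf.rename_isHomogeneous
  · rw [demX_eq_zero_of_not_lt hi]
    exact isHomogeneous_zero _ _ _

theorem schubert_isHomogeneous (w : Perm (Fin n)) : (schubert n w).IsHomogeneous (len n w) := by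
  induction w using w₀_mul_induction with
  | w₀ =>
    rw [schubert_w₀, len_w₀]
    exact IsHomogeneous.prod _ _ _ fun i _ => isHomogeneous_X_pow i _
  | mul_simpleRefl w i h ih =>
    rw [← h.demX_schubert]
    rw [← h.len_mul_simpleRefl] at ih
    exact isHomogeneous_demX ih

theorem degreeOf_simpleRoot_add_degreeOf_demX_le {i : ℕ} {f : R n} (hf : demX n i f ≠ 0)
    (k : Fin n) :
    degreeOf k (simpleRoot n i) + degreeOf k (demX n i f) ≤
      max (degreeOf k f) (degreeOf (simpleRefl n i k) f) := by
  have hi : i + 1 < n := by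
    contrapose! hf
    exact demX_eq_zero_of_not_lt hf.not_gt f
  rw [← degreeOf_mul_eq (simpleRoot_ne_zero hi) hf, simpleRoot_mul_demX]
  refine (degreeOf_sub_le _ _ _).trans_eq ?_
  rw [degreeOf_rename_perm, simpleRefl_inv]

theorem degreeOf_demX_le {i : ℕ} {f : R n} (hf : ∀ k : Fin n, degreeOf k f ≤ n - 1 - k)
    (k : Fin n) : degreeOf k (demX n i f) ≤ n - 1 - k := by
  by_cases h₀ : demX n i f = 0
  · rw [h₀, degreeOf_zero]
    exact Nat.zero_le _
  by_cases hi : i + 1 < n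
  swap
  · exact absurd (demX_eq_zero_of_not_lt hi f) h₀
  have hle := degreeOf_simpleRoot_add_degreeOf_demX_le h₀ k
  have hk := hf k
  have hsk := hf (simpleRefl n i k)
  rw [val_simpleRefl_apply hi] at hsk
  by_cases hki : (k : ℕ) = i + 1
  · obtain rfl : k = ⟨i + 1, hi⟩ := Fin.ext hki
    have hroot : degreeOf ⟨i + 1, hi⟩ (simpleRoot n i) = 1 := by
      rw [simpleRoot_eq_X_sub_X hi, ← neg_sub, degreeOf_neg, degreeOf_X_sub_X_left (by simp)]
    simp only [Nat.succ_ne_self, if_false, if_true] at hk hsk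
    omega
  · split_ifs at hsk <;> omega

theorem degreeOf_staircase_le (k : Fin n) : degreeOf k (staircase n) ≤ n - 1 - k := by
  refine (degreeOf_prod_le _ _ _).trans ?_
  rw [Finset.sum_eq_single k (fun l _ hl => degreeOf_X_pow_of_ne _ hl.symm) (by simp),
    degreeOf_X_self_pow]

theorem degreeOf_schubert_le (w : Perm (Fin n)) (k : Fin n) :
    degreeOf k (schubert n w) ≤ n - 1 - k := by
  induction w using w₀_mul_induction generalizing k with
  | w₀ => exact schubert_w₀ (n := n) ▸ degreeOf_staircase_le k
  | mul_simpleRefl w i h ih => exact h.demX_schubert ▸ degreeOf_demX_le ih k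

/-- The monomial `x_1 ⋯ x_k`. The staircase monomial is the product of these over `k < n`, and
Demazure operators shorten one factor at a time. -/
def initialMonomial (n k : ℕ) : R n := ∏ j : Fin n with j.val < k, X j

theorem initialMonomial_zero : initialMonomial n 0 = 1 := by
  simp [initialMonomial]

theorem initialMonomial_succ {k : ℕ} (hk : k < n) :
    initialMonomial n (k + 1) = initialMonomial n k * X ⟨k, hk⟩ := by
  have hfilter : Finset.univ.filter (fun j : Fin n => (j : ℕ) < k + 1) =
      insert ⟨k, hk⟩ (Finset.univ.filter fun j : Fin n => (j : ℕ) < k) := by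
    ext j
    simp only [Finset.mem_filter_univ, Finset.mem_insert, Fin.ext_iff]
    omega
  rw [initialMonomial, hfilter, Finset.prod_insert (by simp), mul_comm, initialMonomial]

theorem rename_initialMonomial {i k : ℕ} (hik : i + 1 ≠ k) :
    rename (simpleRefl n i) (initialMonomial n k) = initialMonomial n k := by
  by_cases hi : i + 1 < n
  · simp only [initialMonomial, map_prod, rename_X]
    refine Finset.prod_equiv (simpleRefl n i) (fun j => ?_) fun j _ => rfl
    simp only [Finset.mem_filter_univ, val_simpleRefl_apply hi]
    split_ifs <;> omega
  · rw [simpleRefl_eq_one hi, rename_perm_one]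

theorem demX_initialMonomial_succ {i : ℕ} (hi : i + 1 < n) :
    demX n i (initialMonomial n (i + 1)) = initialMonomial n i := by
  refine demX_eq_of_simpleRoot_mul_eq hi ?_
  rw [initialMonomial_succ (Nat.lt_of_succ_lt hi), map_mul, rename_initialMonomial i.succ_ne_self,
    rename_X, simpleRefl_apply_left hi, simpleRoot_eq_X_sub_X hi]
  ring

theorem staircase_eq_prod_initialMonomial :
    staircase n = ∏ k ∈ Finset.range n, initialMonomial n k := by
  have hcomm : ∏ k ∈ Finset.range n, initialMonomial n k =
      ∏ j : Fin n, ∏ _ ∈ Finset.Ico (j + 1 : ℕ) n, X j :=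
    Finset.prod_comm' fun _ j => by
      simp only [Finset.mem_range, Finset.mem_filter_univ, Finset.mem_Ico, Finset.mem_univ,
        and_true]
      omega
  rw [hcomm, staircase]
  refine Finset.prod_congr rfl fun j _ => ?_
  rw [Finset.prod_const, Nat.card_Ico, Nat.sub_sub, add_comm]

theorem demX_mem_insert_zero_range_schubert {f : R n}
    (hf : f ∈ insert 0 (Set.range (schubert n))) (i : ℕ) :
    demX n i f ∈ insert 0 (Set.range (schubert n)) := by
  rcases hf with rfl | ⟨w, rfl⟩
  · exact .inl (demX_eq_zero_of_rename_eq (map_zero _))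
  · rw [demX_schubert]
    split_ifs
    · exact .inr ⟨_, rfl⟩
    · exact .inl rfl

theorem mem_insert_zero_range_schubert_of_initialMonomial_mul {g : R n} {k : ℕ} (hk : k < n)
    (hg : ∀ i < k, rename (simpleRefl n i) g = g)
    (h : initialMonomial n k * g ∈ insert 0 (Set.range (schubert n))) :
    g ∈ insert 0 (Set.range (schubert n)) := by
  induction k with
  | zero => rwa [initialMonomial_zero, one_mul] at h
  | succ k ih =>
    refine ih (Nat.lt_of_succ_lt hk) (fun i hi => hg i (Nat.lt_succ_of_lt hi)) ?_
    rw [← demX_initialMonomial_succ hk, ← demX_mul_of_rename_eq (hg k (Nat.lt_succ_self k))]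
    exact demX_mem_insert_zero_range_schubert h k

theorem prod_initialMonomial_mem_insert_zero_range_schubert {m : ℕ} (hm : m ≤ n) :
    ∏ k ∈ Finset.Ico m n, initialMonomial n k ∈ insert 0 (Set.range (schubert n)) := by
  induction m with
  | zero =>
    rw [← Finset.range_eq_Ico, ← staircase_eq_prod_initialMonomial]
    exact .inr ⟨w₀ n, schubert_w₀⟩
  | succ m ih =>
    refine mem_insert_zero_range_schubert_of_initialMonomial_mul (k := m) hm (fun i hi => ?_) ?_
    · rw [map_prod]
      refine Finset.prod_congr rfl fun k hk => rename_initialMonomial ?_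
      have := (Finset.mem_Ico.mp hk).1
      omega
    · rw [← Finset.prod_eq_prod_Ico_succ_bot hm]
      exact ih (Nat.le_of_succ_le hm)

theorem schubert_one : schubert n 1 = 1 := by
  have h := prod_initialMonomial_mem_insert_zero_range_schubert (le_refl n)
  rw [Finset.Ico_self, Finset.prod_empty] at h
  obtain ⟨w, hw⟩ := h.resolve_left one_ne_zero
  have hlen : len n w = 0 :=
    (schubert_isHomogeneous w).inj_right (hw ▸ isHomogeneous_one _ _) (hw ▸ one_ne_zero)
  rw [← hw, len_eq_zero.mp hlen]

end SchubertPolynomials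

section ReducedFactorizations

variable {n : ℕ} {M : Type*} [AddCommMonoid M]

open Classical in
/-- The length-additive factorizations `w = v⁻¹ u`, encoded as pairs `(u, v)`. They index the
terms of `Sw n w`. -/
def reducedFactorizations (w : Perm (Fin n)) : Finset (Perm (Fin n) × Perm (Fin n)) :=
  {p | w = p.2⁻¹ * p.1 ∧ len n w = len n p.2 + len n p.1}

theorem mem_reducedFactorizations {w : Perm (Fin n)} {p : Perm (Fin n) × Perm (Fin n)} :
    p ∈ reducedFactorizations w ↔ w = p.2⁻¹ * p.1 ∧ len n w = len n p.2 + len n p.1 := by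
  simp only [reducedFactorizations, Finset.mem_filter_univ]

theorem mul_simpleRefl_mem_reducedFactorizations_iff {w u v : Perm (Fin n)} {i : ℕ}
    (hw : len n (w * simpleRefl n i) < len n w) :
    (u * simpleRefl n i, v) ∈ reducedFactorizations (w * simpleRefl n i) ↔
      (u, v) ∈ reducedFactorizations w ∧ len n (u * simpleRefl n i) < len n u := by
  have hsub := len_mul_le v⁻¹ u
  have hu := len_mul_simpleRefl_le u i
  have hu' := len_mul_simpleRefl_le (u * simpleRefl n i) i
  have hws := (len_mul_simpleRefl_lt_iff.mp hw).len_mul_simpleRefl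
  rw [mul_simpleRefl_mul_simpleRefl] at hu'
  rw [len_inv] at hsub
  simp only [mem_reducedFactorizations, ← mul_assoc, mul_left_inj]
  constructor
  · rintro ⟨rfl, h⟩
    exact ⟨⟨rfl, by omega⟩, by omega⟩
  · rintro ⟨⟨rfl, h⟩, hlt⟩
    exact ⟨rfl, by omega⟩

theorem len_mul_simpleRefl_lt_of_mem_reducedFactorizations {w : Perm (Fin n)} {i : ℕ}
    {p : Perm (Fin n) × Perm (Fin n)} (hp : p ∈ reducedFactorizations w)
    (hu : len n (p.1 * simpleRefl n i) < len n p.1) :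
    len n (w * simpleRefl n i) < len n w := by
  obtain ⟨rfl, h⟩ := mem_reducedFactorizations.mp hp
  rw [h, mul_assoc, ← len_inv p.2]
  exact (len_mul_le _ _).trans_lt (Nat.add_lt_add_left hu _)

theorem sum_reducedFactorizations_swap (w : Perm (Fin n)) (f : Perm (Fin n) → Perm (Fin n) → M) :
    ∑ p ∈ reducedFactorizations w⁻¹, f p.2 p.1 = ∑ p ∈ reducedFactorizations w, f p.1 p.2 := by
  refine Finset.sum_equiv (Equiv.prodComm _ _) (fun p => ?_) fun _ _ => rfl
  simp only [mem_reducedFactorizations, Equiv.prodComm_apply, Prod.fst_swap, Prod.snd_swap,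
    len_inv, inv_eq_iff_eq_inv (a := w), mul_inv_rev, inv_inv, add_comm (len n p.1)]

theorem sum_reducedFactorizations_ite_right (w : Perm (Fin n)) (i : ℕ)
    (f : Perm (Fin n) → Perm (Fin n) → M) :
    (∑ p ∈ reducedFactorizations w,
        if len n (p.1 * simpleRefl n i) < len n p.1 then f (p.1 * simpleRefl n i) p.2 else 0) =
      if len n (w * simpleRefl n i) < len n w then
        ∑ p ∈ reducedFactorizations (w * simpleRefl n i), f p.1 p.2 else 0 := by
  rw [← Finset.sum_filter]
  split_ifs with hw
  · refine Finset.sum_equiv ((Equiv.mulRight (simpleRefl n i)).prodCongr (Equiv.refl _))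
      (fun p => ?_) fun _ _ => rfl
    rw [Finset.mem_filter, ← mul_simpleRefl_mem_reducedFactorizations_iff hw]
    rfl
  · rw [Finset.filter_false_of_mem, Finset.sum_empty]
    exact fun p hp hu => hw (len_mul_simpleRefl_lt_of_mem_reducedFactorizations hp hu)

theorem sum_reducedFactorizations_ite_left (w : Perm (Fin n)) (i : ℕ)
    (f : Perm (Fin n) → Perm (Fin n) → M) :
    (∑ p ∈ reducedFactorizations w,
        if len n (p.2 * simpleRefl n i) < len n p.2 then f p.1 (p.2 * simpleRefl n i) else 0) =
      if len n (simpleRefl n i * w) < len n w then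
        ∑ p ∈ reducedFactorizations (simpleRefl n i * w), f p.1 p.2 else 0 := by
  have h := sum_reducedFactorizations_ite_right w⁻¹ i fun v u => f u v
  rw [sum_reducedFactorizations_swap w fun u v =>
    if len n (v * simpleRefl n i) < len n v then f u (v * simpleRefl n i) else 0] at h
  rw [h, ← sum_reducedFactorizations_swap, len_simpleRefl_mul, len_inv, mul_inv_rev,
    simpleRefl_inv]

end ReducedFactorizations

section DoubleSchubertTensors

variable {n : ℕ}

/-- The polynomial `𝔖_w(-x)`, which supplies the left tensor factors of `Sw`. -/
def negSchubert (n : ℕ) (w : Perm (Fin n)) : R n :=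
  aeval (fun i => -(X i : R n)) (schubert n w)

theorem negSchubert_eq (w : Perm (Fin n)) :
    negSchubert n w = (-1) ^ len n w * schubert n w :=
  aeval_neg_X_of_isHomogeneous (schubert_isHomogeneous w)

theorem negSchubert_one : negSchubert n 1 = 1 := by
  rw [negSchubert, schubert_one, map_one]

theorem negSchubert_isHomogeneous (w : Perm (Fin n)) :
    (negSchubert n w).IsHomogeneous (len n w) := by
  rw [negSchubert_eq]
  simpa only [map_neg, map_one, map_pow] using (schubert_isHomogeneous w).C_mul ((-1) ^ len n w)

theorem rename_schubert (u : Perm (Fin n)) (i : ℕ) :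
    rename (simpleRefl n i) (schubert n u) = schubert n u - simpleRoot n i *
      if len n (u * simpleRefl n i) < len n u then schubert n (u * simpleRefl n i) else 0 := by
  rw [← demX_schubert, simpleRoot_mul_demX, sub_sub_cancel]

theorem rename_negSchubert (v : Perm (Fin n)) (i : ℕ) :
    rename (simpleRefl n i) (negSchubert n v) = negSchubert n v + simpleRoot n i *
      if len n (v * simpleRefl n i) < len n v then negSchubert n (v * simpleRefl n i) else 0 := by
  simp only [negSchubert_eq, map_mul, map_pow, map_neg, map_one, rename_schubert]
  split_ifs with h
  · rw [← (len_mul_simpleRefl_lt_iff.mp h).len_mul_simpleRefl]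
    ring
  · rw [mul_zero, sub_zero, add_zero]

theorem Sw_eq_sum (w : Perm (Fin n)) :
    Sw n w = ∑ p ∈ reducedFactorizations w, negSchubert n p.2 ⊗ₜ schubert n p.1 := by
  classical
  have hmem : (w, 1) ∈ reducedFactorizations w := by
    simp only [mem_reducedFactorizations, inv_one, one_mul, len_one, zero_add, and_self]
  rw [Sw, ← Finset.add_sum_erase _ _ hmem, negSchubert_one]
  congr 1
  refine Finset.sum_congr (Finset.ext fun ⟨u, v⟩ => ?_) fun _ _ => rfl
  simp only [Finset.mem_filter_univ, Finset.mem_erase, mem_reducedFactorizations, ne_eq,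
    Prod.mk.injEq]
  constructor
  · rintro ⟨hw, hlt, hlen⟩
    exact ⟨fun h => hlt.ne (by rw [h.1]), hw, hlen⟩
  · rintro ⟨hne, rfl, hlen⟩
    have hv : len n v ≠ 0 := fun h => hne (by simp [len_eq_zero.mp h])
    exact ⟨rfl, by omega, hlen⟩

theorem Sw_one : Sw n 1 = 1 := by
  simp [Sw, len_one, schubert_one, Algebra.TensorProduct.one_def]

/-- The action of `w` on the first tensor factor of `R ⊗ R`. -/
def leftAct (w : Perm (Fin n)) : T n →ₐ[Ssub n] T n :=
  Algebra.TensorProduct.map (renameS n w) (AlgHom.id (Ssub n) (R n))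

/-- The action of `w` on the second tensor factor of `R ⊗ R`. -/
def rightAct (w : Perm (Fin n)) : T n →ₐ[Ssub n] T n :=
  Algebra.TensorProduct.map (AlgHom.id (Ssub n) (R n)) (renameS n w)

theorem leftAct_tmul (w : Perm (Fin n)) (f g : R n) :
    leftAct w (f ⊗ₜ g) = rename w f ⊗ₜ[Ssub n] g :=
  rfl

theorem rightAct_tmul (w : Perm (Fin n)) (f g : R n) :
    rightAct w (f ⊗ₜ g) = f ⊗ₜ[Ssub n] rename w g :=
  rfl

theorem leftAct_simpleRefl_Sw (w : Perm (Fin n)) (i : ℕ) :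
    leftAct (simpleRefl n i) (Sw n w) = Sw n w + (simpleRoot n i ⊗ₜ 1) *
      if len n (simpleRefl n i * w) < len n w then Sw n (simpleRefl n i * w) else 0 := by
  simp only [Sw_eq_sum]
  rw [← sum_reducedFactorizations_ite_left w i fun u v => negSchubert n v ⊗ₜ schubert n u,
    Finset.mul_sum, ← Finset.sum_add_distrib, map_sum]
  refine Finset.sum_congr rfl fun p _ => ?_
  rw [leftAct_tmul, rename_negSchubert, add_tmul, mul_ite, mul_ite, mul_zero, mul_zero, ite_tmul,
    Algebra.TensorProduct.tmul_mul_tmul, one_mul]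

theorem rightAct_simpleRefl_Sw (w : Perm (Fin n)) (i : ℕ) :
    rightAct (simpleRefl n i) (Sw n w) = Sw n w - (1 ⊗ₜ simpleRoot n i) *
      if len n (w * simpleRefl n i) < len n w then Sw n (w * simpleRefl n i) else 0 := by
  simp only [Sw_eq_sum]
  rw [← sum_reducedFactorizations_ite_right w i fun u v => negSchubert n v ⊗ₜ schubert n u,
    Finset.mul_sum, ← Finset.sum_sub_distrib, map_sum]
  refine Finset.sum_congr rfl fun p _ => ?_
  rw [rightAct_tmul, rename_schubert, tmul_sub, mul_ite, mul_ite, mul_zero, mul_zero, tmul_ite,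
    Algebra.TensorProduct.tmul_mul_tmul, one_mul]

theorem Fw_tmul (w : Perm (Fin n)) (f g : R n) :
    Fw n w (f ⊗ₜ[Ssub n] g) = f * rename w g :=
  Algebra.TensorProduct.productMap_apply_tmul _ _ f g

theorem Fw_mul (u w : Perm (Fin n)) (z : T n) : Fw n (u * w) z = Fw n u (rightAct w z) := by
  induction z using TensorProduct.induction_on with
  | zero => simp only [map_zero]
  | add x y hx hy => simp only [map_add, hx, hy]
  | tmul f g => rw [rightAct_tmul, Fw_tmul, Fw_tmul, rename_perm_mul]

theorem Fw_mul_simpleRefl_Sw (u w : Perm (Fin n)) (i : ℕ) :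
    Fw n (u * simpleRefl n i) (Sw n w) = Fw n u (Sw n w) - rename u (simpleRoot n i) *
      if len n (w * simpleRefl n i) < len n w then Fw n u (Sw n (w * simpleRefl n i)) else 0 := by
  rw [Fw_mul, rightAct_simpleRefl_Sw, map_sub, map_mul, Fw_tmul, one_mul, apply_ite (Fw n u),
    map_zero]

end DoubleSchubertTensors

section Localization

variable {n : ℕ}

theorem isSymmetric_of_rename_simpleRefl {f : R n}
    (hf : ∀ i, i + 1 < n → rename (simpleRefl n i) f = f) : f.IsSymmetric := by
  intro w
  induction w using perm_induction with
  | one => exact rename_perm_one f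
  | mul_simpleRefl w i hi _ ih => rw [rename_perm_mul, hf i hi, ih]

theorem Fw_one_Sw_eq_sum (w : Perm (Fin n)) :
    Fw n 1 (Sw n w) = ∑ p ∈ reducedFactorizations w, negSchubert n p.2 * schubert n p.1 := by
  simp only [Sw_eq_sum, map_sum, Fw_tmul, rename_perm_one]

theorem Fw_one_Sw_isHomogeneous (w : Perm (Fin n)) :
    (Fw n 1 (Sw n w)).IsHomogeneous (len n w) := by
  rw [Fw_one_Sw_eq_sum]
  refine IsHomogeneous.sum _ _ _ fun p hp => ?_
  rw [(mem_reducedFactorizations.mp hp).2]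
  exact (negSchubert_isHomogeneous _).mul (schubert_isHomogeneous _)

theorem degreeOf_Fw_one_Sw_last (w : Perm (Fin n)) {k : Fin n} (hk : (k : ℕ) + 1 = n) :
    degreeOf k (Fw n 1 (Sw n w)) = 0 := by
  have hschubert (v : Perm (Fin n)) : degreeOf k (schubert n v) = 0 := by
    have := degreeOf_schubert_le v k
    omega
  have hneg (v : Perm (Fin n)) : degreeOf k (negSchubert n v) = 0 := by
    have h := degreeOf_C_mul_le (schubert n v) k ((-1) ^ len n v)
    rw [map_pow, map_neg, map_one, ← negSchubert_eq, hschubert] at h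
    exact Nat.le_zero.mp h
  rw [Fw_one_Sw_eq_sum, ← Nat.le_zero]
  refine (degreeOf_sum_le _ _ _).trans (Finset.sup_le fun p _ => ?_)
  exact (degreeOf_mul_le _ _ _).trans (by rw [hneg, hschubert])

theorem rename_Fw_one_leftAct (i : ℕ) (z : T n) :
    rename (simpleRefl n i) (Fw n 1 (leftAct (simpleRefl n i) z)) =
      Fw n 1 (rightAct (simpleRefl n i) z) := by
  induction z using TensorProduct.induction_on with
  | zero => simp only [map_zero]
  | add x y hx hy => simp only [map_add, hx, hy]
  | tmul f g =>
    rw [leftAct_tmul, rightAct_tmul, Fw_tmul, Fw_tmul, map_mul, rename_perm_one, rename_perm_one,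
      rename_simpleRefl_rename_simpleRefl]

theorem rename_Fw_one_Sw {w : Perm (Fin n)} (hw : w ≠ 1)
    (ih : ∀ v, len n v < len n w → Fw n 1 (Sw n v) = if v = 1 then 1 else 0) (i : ℕ) :
    rename (simpleRefl n i) (Fw n 1 (Sw n w)) = Fw n 1 (Sw n w) := by
  have hite (v : Perm (Fin n)) : (if len n v < len n w then Fw n 1 (Sw n v) else 0) =
      if v = 1 then 1 else 0 := by
    split_ifs with hlt hv hv
    · rw [ih v hlt, if_pos hv]
    · rw [ih v hlt, if_neg hv]
    · rw [hv, len_one, Nat.pos_iff_ne_zero, ne_eq, len_eq_zero] at hlt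
      exact absurd hw hlt
    · rfl
  have hcomm : (if simpleRefl n i * w = 1 then 1 else 0 : R n) =
      if w * simpleRefl n i = 1 then 1 else 0 :=
    if_congr (by rw [mul_eq_one_iff_eq_inv', mul_eq_one_iff_eq_inv]) rfl rfl
  have h := rename_Fw_one_leftAct i (Sw n w)
  rw [leftAct_simpleRefl_Sw, rightAct_simpleRefl_Sw, map_add, map_sub, map_mul, map_mul, Fw_tmul,
    Fw_tmul, map_one, rename_perm_one, apply_ite (Fw n 1), apply_ite (Fw n 1), map_zero, hite,
    hite, hcomm, map_add, map_mul, map_mul, rename_simpleRoot_self, map_one, apply_ite (rename _),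
    map_one, map_zero] at h
  linear_combination h

theorem Fw_one_Sw (w : Perm (Fin n)) : Fw n 1 (Sw n w) = if w = 1 then 1 else 0 := by
  induction hd : len n w using Nat.strong_induction_on generalizing w with
  | _ d ih =>
    subst hd
    split_ifs with hw
    · rw [hw, Sw_one, map_one]
    obtain ⟨i, hi, -⟩ := exists_hasDescent hw
    have hsymm : (Fw n 1 (Sw n w)).IsSymmetric :=
      isSymmetric_of_rename_simpleRefl fun i _ =>
        rename_Fw_one_Sw hw (fun v hv => ih _ hv v rfl) i
    have hlast := degreeOf_Fw_one_Sw_last w (k := ⟨n - 1, by omega⟩) (by simp only; omega)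
    rw [eq_C_of_isSymmetric_of_degreeOf_eq_zero hsymm hlast,
      (Fw_one_Sw_isHomogeneous w).coeff_eq_zero, C_0]
    simpa [len_eq_zero, eq_comm] using hw

theorem Fw_Sw_eq_zero {u w : Perm (Fin n)} (hle : len n u ≤ len n w) (hne : u ≠ w) :
    Fw n u (Sw n w) = 0 := by
  induction u using perm_induction generalizing w with
  | one => rw [Fw_one_Sw, if_neg hne.symm]
  | mul_simpleRefl u i _ hlen ih =>
    rw [Fw_mul_simpleRefl_Sw, ih (by omega) (by rintro rfl; omega), zero_sub, neg_eq_zero]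
    split_ifs with hlt
    · have hw := len_mul_simpleRefl_le (w * simpleRefl n i) i
      rw [mul_simpleRefl_mul_simpleRefl] at hw
      rw [ih (by omega), mul_zero]
      rintro rfl
      exact hne (mul_simpleRefl_mul_simpleRefl w i)
    · exact mul_zero _

theorem Fw_Sw_self_ne_zero (u : Perm (Fin n)) : Fw n u (Sw n u) ≠ 0 := by
  induction u using perm_induction with
  | one =>
    rw [Fw_one_Sw, if_pos rfl]
    exact one_ne_zero
  | mul_simpleRefl u i hi hlen ih =>
    have hroot : rename u (simpleRoot n i) ≠ 0 :=
      (map_ne_zero_iff _ (rename_injective _ u.injective)).mpr (simpleRoot_ne_zero hi)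
    rw [Fw_mul_simpleRefl_Sw, Fw_Sw_eq_zero (by omega) fun h => by rw [← h] at hlen; omega,
      mul_simpleRefl_mul_simpleRefl, if_pos (by omega), zero_sub, neg_ne_zero]
    exact mul_ne_zero hroot ih

/-- `Fw n w` as a homomorphism of left `R`-modules. -/
def fwLinearMap (w : Perm (Fin n)) : T n →ₗ[R n] R n :=
  (Algebra.TensorProduct.productLeftAlgHom (AlgHom.id (R n) (R n)) (renameS n w)).toLinearMap

end Localization

theorem statement5_general (n : ℕ) (P : Equiv.Perm (Fin n) → Prop) :
    Set.InjOn (fun z : T n => fun w : {w : Equiv.Perm (Fin n) // P w} => Fw n w.1 z)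
      (Submodule.span (R n) {z : T n | ∃ w, P w ∧ z = Sw n w} : Set (T n)) := by
  intro x hx y hy hxy
  have himage : {z : T n | ∃ w, P w ∧ z = Sw n w} = Sw n '' {w | P w} := by
    ext z
    simp only [Set.mem_ofPred_eq, Set.mem_image, eq_comm]
  rw [himage] at hx hy
  refine sub_eq_zero.mp <| eq_zero_of_mem_span_of_triangular (len n) (F := fwLinearMap)
    (fun _ _ => Fw_Sw_eq_zero) Fw_Sw_self_ne_zero (sub_mem hx hy) fun w hw => ?_
  rw [map_sub, sub_eq_zero]
  exact congrFun hxy ⟨w, hw⟩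

/-- For `0 ≤ j ≤ n(n-1)/2 + 1`, the left `R`-module homomorphism
`⊕_{ℓ(w) < j} F_w` is injective on `Γ_{<j}`, the left `R`-submodule of `R ⊗_{R^{S_n}} R`
spanned by `{S_w : ℓ(w) < j}`. -/
theorem statement5 (n j : ℕ) (hj : j ≤ n.choose 2 + 1) :
    Set.InjOn
      (fun z : T n => fun w : {w : Equiv.Perm (Fin n) // len n w < j} => Fw n w.1 z)
      (Submodule.span (R n) {z : T n | ∃ w, len n w < j ∧ z = Sw n w} : Set (T n)) :=
  statement5_general n (len n · < j)
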